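/- arXiv:1905.05119 — 4 statements merged into one kernel-verified Lean document; each statement's English description precedes it below -/
import Mathlib

section
/- Let (V, E) be a finite DAG with execution times X : V → ℕ and let S_X be the ASAP start-time function. Then for every vertex v and every path v_1, …, v_t from a source to v (so v_t = v, v_1 is a source, and E v_j v_{j+1} for all 1 ≤ j < t), the start time S_X v is at least the distance of that path, i.e., S_X v ≥ Σ_{j=1}^{t−1} X v_j. -/
open scoped Classical

/-!
A maximum over the predecessors of `v` dominates `S u + X u` for each edge from `u` to `v`. Adding
these inequalities along a path telescopes to `S (head) + distance ≤ S (last)`, where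
`S (head)` is nonnegative.
-/

/-- Start times `S` form a schedule for the precedence relation `E` and the execution times `X`
if no vertex starts before all of its predecessors have finished. This is the property of the ASAP
start times that bounds path distances; minimality is not part of it. -/
def IsSchedule {V M : Type*} [Add M] [LE M] (E : V → V → Prop) (X S : V → M) : Prop :=
  ∀ ⦃u v : V⦄, E u v → S u + X u ≤ S v

theorem isSchedule_iff_sup_le {V M : Type*} [Fintype V] [Add M] [SemilatticeSup M] [OrderBot M]
    {E : V → V → Prop} [DecidableRel E] {X S : V → M} :
    IsSchedule E X S ↔
      ∀ v : V, (Finset.univ.filter (fun u => E u v)).sup (fun u => S u + X u) ≤ S v := by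
  simp only [IsSchedule, Finset.sup_le_iff, Finset.mem_filter_univ]
  exact forall_comm

section Path

variable {V M : Type*} [AddMonoid M] [Preorder M] [AddRightMono M]
  {E : V → V → Prop} {X S : V → M} {p : List V}

theorem IsSchedule.head_add_sum_le_getLast (hS : IsSchedule E X S) (hchain : p.IsChain E)
    (hp : p ≠ []) : S (p.head hp) + (p.dropLast.map X).sum ≤ S (p.getLast hp) := by
  induction hchain with
  | nil => contradiction
  | singleton a => simp
  | @cons_cons a b l hab _ ih =>
    calc S a + ((a :: b :: l).dropLast.map X).sum
        = (S a + X a) + ((b :: l).dropLast.map X).sum := by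
          rw [List.dropLast_cons_cons, List.map_cons, List.sum_cons, add_assoc]
      _ ≤ S b + ((b :: l).dropLast.map X).sum := by gcongr; exact hS hab
      _ ≤ S ((b :: l).getLast (List.cons_ne_nil b l)) := ih (List.cons_ne_nil b l)
      _ = S ((a :: b :: l).getLast hp) := by rw [List.getLast_cons_cons]

theorem asap_start_ge_path_distance_general (hS : IsSchedule E X S) (hchain : p.IsChain E)
    (hp : p ≠ []) (hhead : 0 ≤ S (p.head hp)) :
    (p.dropLast.map X).sum ≤ S (p.getLast hp) :=
  (le_add_of_nonneg_left hhead).trans (hS.head_add_sum_le_getLast hchain hp)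

end Path

/-- Let `S` be the ASAP start-time function of a finite DAG `(V, E)`
with execution times `X`.  For every vertex `v` and every path `v₁, …, v_t` from a
source to `v` (given as a nonempty list `p` with `E`-consecutive elements, whose
head is a source and whose last element is `v`), the start time `S v` is at least
the distance of that path, i.e. the sum of `X` over the path excluding `v` itself. -/
theorem asap_start_ge_path_distance {V : Type*} [Fintype V] (E : V → V → Prop)
    (hE : ∀ v : V, ¬ Relation.TransGen E v v) (X S : V → ℕ)
    (hS : ∀ v : V,
      S v = (Finset.univ.filter (fun u => E u v)).sup (fun u => S u + X u))
    (v : V) (p : List V) (hp : p ≠ []) (hchain : List.Chain' E p)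
    (hsrc : ∀ u : V, ¬ E u (p.head hp)) (hlast : p.getLast hp = v) :
    (p.dropLast.map X).sum ≤ S v :=
  hlast ▸ asap_start_ge_path_distance_general
    (isSchedule_iff_sup_le.mpr fun w => (hS w).ge) hchain hp (Nat.zero_le _)
end

section
/- Let (V, E) be a finite DAG with execution times X : V → ℕ and let S_X be the ASAP start-time function. Then for every vertex v, S_X v equals the maximum, over all paths from a source to v, of the distance of the path; i.e., S_X v = max over paths v_1, …, v_t (with v_t = v, v_1 a source, E v_j v_{j+1} for 1 ≤ j < t) of Σ_{j=1}^{t−1} X v_j. (In a finite DAG every vertex admits at least one such path, so the maximum is over a nonempty finite set.) -/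
/-!
Cutting the last edge `E u v` off a path removes exactly `X u` from its distance, so the distances
of the paths from sources to `v` obey the recursion that defines the start times. Well-founded
induction along `E` then identifies the start time of `v` with the greatest of these distances.
-/

open scoped Classical

section PathDistance

variable {V M : Type*} [AddMonoid M] {E : V → V → Prop} {X : V → M}

/-- The distances of the paths from a source of `E` to `v`. A path is a nonempty list whose last
entry is `v`; the weight of `v` itself is not counted. -/
def pathDistances (E : V → V → Prop) (X : V → M) (v : V) : Set M :=
  {d | ∃ (p : List V) (hp : p ≠ []), List.IsChain E p ∧ (∀ u, ¬ E u (p.head hp)) ∧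
    p.getLast hp = v ∧ (p.dropLast.map X).sum = d}

theorem zero_mem_pathDistances {v : V} (hv : ∀ u, ¬ E u v) : 0 ∈ pathDistances E X v :=
  ⟨[v], List.cons_ne_nil v [], List.isChain_singleton v, hv, rfl, rfl⟩

theorem add_mem_pathDistances {u v : V} {d : M} (huv : E u v) (hd : d ∈ pathDistances E X u) :
    d + X u ∈ pathDistances E X v := by
  obtain ⟨p, hp, hchain, hsource, rfl, rfl⟩ := hd
  refine ⟨p ++ [v], by simp, ?_, ?_, by simp, ?_⟩
  · refine List.isChain_append.2 ⟨hchain, List.isChain_singleton v, ?_⟩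
    simpa [List.getLast?_eq_getLast_of_ne_nil hp] using huv
  · rwa [List.head_append_of_ne_nil hp]
  · calc ((p ++ [v]).dropLast.map X).sum
        = ((p.dropLast ++ [p.getLast hp]).map X).sum := by
          rw [List.dropLast_concat, List.dropLast_append_getLast]
      _ = (p.dropLast.map X).sum + X (p.getLast hp) := by simp

theorem mem_pathDistances_iff {v : V} {d : M} :
    d ∈ pathDistances E X v ↔
      ((∀ u, ¬ E u v) ∧ d = 0) ∨ ∃ u, E u v ∧ ∃ c ∈ pathDistances E X u, d = c + X u := by
  constructor
  · rintro ⟨p, hp, hchain, hsource, rfl, rfl⟩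
    obtain ⟨q, w, rfl⟩ := (List.eq_nil_or_concat' p).resolve_left hp
    obtain rfl | ⟨r, u, rfl⟩ := List.eq_nil_or_concat' q
    · exact .inl ⟨hsource, rfl⟩
    · obtain ⟨hchain_u, -, hedge⟩ := List.isChain_append.1 hchain
      refine .inr ⟨u, by simpa using hedge, (r.map X).sum, ?_, by simp⟩
      refine ⟨r ++ [u], by simp, hchain_u, ?_, by simp, by simp⟩
      rwa [List.head_append_of_ne_nil (by simp)] at hsource
  · rintro (⟨hv, rfl⟩ | ⟨u, huv, c, hc, rfl⟩)
    · exact zero_mem_pathDistances hv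
    · exact add_mem_pathDistances huv hc

end PathDistance

section StartTime

variable {V M : Type*} {E : V → V → Prop} {X S : V → M}

/-- `S` is an as-soon-as-possible start-time function for the execution times `X`. Sources are
treated separately because `0` need not be the least element of `M`. -/
structure IsASAPStart [AddMonoid M] [LE M] (E : V → V → Prop) (X S : V → M) : Prop where
  eq_zero_of_source : ∀ v, (∀ u, ¬ E u v) → S v = 0
  isGreatest_of_edge : ∀ u v, E u v → IsGreatest ((fun w => S w + X w) '' {w | E w v}) (S v)

theorem isASAPStart_of_eq_sup [AddMonoid M] [LinearOrder M] [OrderBot M]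
    [CanonicallyOrderedAdd M] {pred : V → Finset V} (hpred : ∀ u v, u ∈ pred v ↔ E u v)
    (hS : ∀ v, S v = (pred v).sup fun u => S u + X u) : IsASAPStart E X S where
  eq_zero_of_source v hv := by
    have hempty : pred v = ∅ :=
      Finset.eq_empty_of_forall_notMem fun u hu => hv u ((hpred u v).1 hu)
    rw [hS v, hempty, Finset.sup_empty, bot_eq_zero']
  isGreatest_of_edge u v huv := by
    rw [hS v]
    constructor
    · obtain ⟨w, hw, hmax⟩ :=
        Finset.exists_mem_eq_sup (pred v) ⟨u, (hpred u v).2 huv⟩ fun w => S w + X w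
      exact ⟨w, (hpred w v).1 hw, hmax.symm⟩
    · rintro _ ⟨w, hw, rfl⟩
      exact Finset.le_sup (f := fun w => S w + X w) ((hpred w v).2 hw)

theorem asap_start_eq_max_path_distance_general [AddMonoid M] [Preorder M] [AddRightMono M]
    (hE : WellFounded E) (hS : IsASAPStart E X S) (v : V) :
    IsGreatest (pathDistances E X v) (S v) := by
  induction v using hE.induction with
  | _ v ih =>
    constructor
    · by_cases hv : ∀ u, ¬ E u v
      · exact mem_pathDistances_iff.2 (.inl ⟨hv, hS.eq_zero_of_source v hv⟩)
      · obtain ⟨w, hwv⟩ := not_forall_not.1 hv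
        obtain ⟨u, huv, hu⟩ := (hS.isGreatest_of_edge w v hwv).1
        exact mem_pathDistances_iff.2 (.inr ⟨u, huv, S u, (ih u huv).1, hu.symm⟩)
    · intro d hd
      obtain ⟨hv, rfl⟩ | ⟨u, huv, c, hc, rfl⟩ := mem_pathDistances_iff.1 hd
      · exact (hS.eq_zero_of_source v hv).ge
      · calc c + X u ≤ S u + X u := by gcongr; exact (ih u huv).2 hc
          _ ≤ S v := (hS.isGreatest_of_edge u v huv).2 ⟨u, huv, rfl⟩

end StartTime

theorem wellFounded_of_acyclic {V : Type*} [Finite V] {E : V → V → Prop}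
    (hE : ∀ v, ¬ Relation.TransGen E v v) : WellFounded E :=
  have : Std.Irrefl (Relation.TransGen E) := ⟨hE⟩
  Subrelation.wf Relation.TransGen.single
    (Finite.wellFounded_of_trans_of_irrefl (Relation.TransGen E))

/-- Let `S` be the ASAP start-time function of a finite DAG `(V, E)`
with execution times `X`.  For every vertex `v`, the start time `S v` is the
maximum (`IsGreatest`: both attained and an upper bound) over all paths from a
source to `v` of the distance of the path, i.e. the sum of `X` over the path
excluding `v` itself. -/
theorem asap_start_eq_max_path_distance {V : Type*} [Fintype V] (E : V → V → Prop)
    (hE : ∀ v : V, ¬ Relation.TransGen E v v) (X S : V → ℕ)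
    (hS : ∀ v : V,
      S v = (Finset.univ.filter (fun u => E u v)).sup (fun u => S u + X u))
    (v : V) :
    IsGreatest {d : ℕ | ∃ (p : List V) (hp : p ≠ []),
        List.Chain' E p ∧ (∀ u : V, ¬ E u (p.head hp)) ∧ p.getLast hp = v ∧
        (p.dropLast.map X).sum = d} (S v) :=
  asap_start_eq_max_path_distance_general (wellFounded_of_acyclic hE)
    (isASAPStart_of_eq_sup (fun _ _ => Finset.mem_filter_univ _) hS) v
end

section
/- Let T > 0, L, R, Δ be real numbers with 0 ≤ L ≤ R, let r : ℕ → ℝ be a sporadic release sequence, i.e., r (j+1) ≥ r j + T for all j, and let t be the start of a problem window of length Δ. Assume the first job is a carry-in job released strictly before the window but no earlier than t − (R − L), i.e., t − (R − L) ≤ r 0 < t. Call job j a body job if it is released within the window and it is not the last job released within the window, i.e., t ≤ r j and r (j+1) < t + Δ. Then the number of body jobs is at most max(⌊(Δ − L + R)/T⌋ − 1, 0); consequently, if every job generates workload at most C ≥ 0, the total workload generated by the body jobs is at most max((⌊(Δ − L + R)/T⌋ − 1) · C, 0). -/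
/-!
Job `0` precedes the window, so every body job `j` satisfies `1 ≤ j`. If job `0` is released no
earlier than `s` and the window ends at `b`, then job `j + 1` is released between `s + (j + 1) T`
and `b`, whence `j + 1 ≤ ⌊(b - s) / T⌋`. The indices of the body jobs thus lie between `1` and
`⌊(b - s) / T⌋ - 1`.
-/

/-- The release times `r` of a sporadic task with minimum inter-arrival time `T`. -/
def IsSporadic {M : Type*} [Add M] [LE M] (T : M) (r : ℕ → M) : Prop :=
  ∀ j, r j + T ≤ r (j + 1)

/-- The body jobs of the window `[a, b)`: those released within the window, except the last one.
For increasing `r`, a job is not the last one exactly when its successor is released before `b`,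
which is the condition used here. -/
def bodyJobs {M : Type*} [LE M] [LT M] (r : ℕ → M) (a b : M) : Set ℕ :=
  {j | a ≤ r j ∧ r (j + 1) < b}

theorem IsSporadic.zero_add_nsmul_le {M : Type*} [AddMonoid M] [Preorder M] [AddRightMono M]
    {T : M} {r : ℕ → M} (hr : IsSporadic T r) (n : ℕ) : r 0 + n • T ≤ r n := by
  induction n with
  | zero => simp
  | succ n ih =>
    calc r 0 + (n + 1) • T = r 0 + n • T + T := by rw [succ_nsmul, add_assoc]
      _ ≤ r n + T := by gcongr
      _ ≤ r (n + 1) := hr n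

theorem one_le_of_mem_bodyJobs {M : Type*} [Preorder M] {r : ℕ → M} {a b : M} {j : ℕ}
    (ha : r 0 < a) (hj : j ∈ bodyJobs r a b) : 1 ≤ j := by
  refine Nat.one_le_iff_ne_zero.mpr ?_
  rintro rfl
  exact ha.not_ge hj.1

theorem finsum_mem_le_ncard_nsmul {ι M : Type*} [AddCommMonoid M] [Preorder M] [AddLeftMono M]
    {s : Set ι} (hs : s.Finite) {f : ι → M} {c : M} (hf : ∀ i ∈ s, f i ≤ c) :
    ∑ᶠ i ∈ s, f i ≤ s.ncard • c := by
  rw [finsum_mem_eq_finite_toFinset_sum f hs, Set.ncard_eq_toFinset_card s hs]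
  exact Finset.sum_le_card_nsmul _ _ _ fun i hi => hf i (hs.mem_toFinset.mp hi)

theorem mul_le_max_mul_zero {R : Type*} [Semiring R] [LinearOrder R] [IsOrderedRing R]
    [ExistsAddOfLE R] {x k : R} (c : R) (hx : 0 ≤ x) (hxk : x ≤ max k 0) :
    x * c ≤ max (k * c) 0 := by
  rcases le_total 0 c with hc | hc
  · calc x * c ≤ max k 0 * c := by gcongr
      _ = max (k * c) 0 := by rw [max_mul_of_nonneg _ _ hc, zero_mul]
  · exact (mul_nonpos_of_nonneg_of_nonpos hx hc).trans (le_max_right _ _)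

section FloorRing

variable {𝕜 : Type*} [Field 𝕜] [LinearOrder 𝕜] [IsStrictOrderedRing 𝕜] [FloorRing 𝕜]
  {T s a b : 𝕜} {r : ℕ → 𝕜}

theorem IsSporadic.add_one_le_floor_of_mem_bodyJobs (hr : IsSporadic T r) (hT : 0 < T)
    (hs : s ≤ r 0) {j : ℕ} (hj : j ∈ bodyJobs r a b) : (j : ℤ) + 1 ≤ ⌊(b - s) / T⌋ := by
  have span_le : (j + 1) * T ≤ b - s := by
    have hrel := hr.zero_add_nsmul_le (j + 1)
    rw [nsmul_eq_mul, Nat.cast_succ] at hrel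
    linarith [hj.2]
  rw [Int.le_floor, le_div_iff₀ hT]
  exact_mod_cast span_le

theorem IsSporadic.bodyJobs_subset_Icc (hr : IsSporadic T r) (hT : 0 < T) (hs : s ≤ r 0)
    (ha : r 0 < a) : bodyJobs r a b ⊆ Set.Icc 1 (⌊(b - s) / T⌋ - 1).toNat := by
  intro j hj
  have := hr.add_one_le_floor_of_mem_bodyJobs hT hs hj
  exact ⟨one_le_of_mem_bodyJobs ha hj, by omega⟩

theorem IsSporadic.finite_bodyJobs (hr : IsSporadic T r) (hT : 0 < T) (ha : r 0 < a) :
    (bodyJobs r a b).Finite :=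
  (Set.finite_Icc _ _).subset (hr.bodyJobs_subset_Icc hT le_rfl ha)

theorem IsSporadic.ncard_bodyJobs_le (hr : IsSporadic T r) (hT : 0 < T) (hs : s ≤ r 0)
    (ha : r 0 < a) : ((bodyJobs r a b).ncard : ℤ) ≤ max (⌊(b - s) / T⌋ - 1) 0 := by
  rw [← Int.ofNat_toNat, Nat.cast_le]
  calc (bodyJobs r a b).ncard ≤ (Set.Icc 1 (⌊(b - s) / T⌋ - 1).toNat).ncard :=
        Set.ncard_le_ncard (hr.bodyJobs_subset_Icc hT hs ha) (Set.finite_Icc _ _)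
    _ = (⌊(b - s) / T⌋ - 1).toNat := by simp

theorem IsSporadic.finsum_mem_bodyJobs_le (hr : IsSporadic T r) (hT : 0 < T) (hs : s ≤ r 0)
    (ha : r 0 < a) {w : ℕ → 𝕜} {C : 𝕜} (hw : ∀ j ∈ bodyJobs r a b, w j ≤ C) :
    ∑ᶠ j ∈ bodyJobs r a b, w j ≤ max (((⌊(b - s) / T⌋ : 𝕜) - 1) * C) 0 := by
  have ncard_le : ((bodyJobs r a b).ncard : 𝕜) ≤ max ((⌊(b - s) / T⌋ : 𝕜) - 1) 0 := by
    exact_mod_cast hr.ncard_bodyJobs_le hT hs ha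
  calc ∑ᶠ j ∈ bodyJobs r a b, w j ≤ (bodyJobs r a b).ncard • C :=
        finsum_mem_le_ncard_nsmul (hr.finite_bodyJobs hT ha) hw
    _ = (bodyJobs r a b).ncard * C := nsmul_eq_mul _ _
    _ ≤ max (((⌊(b - s) / T⌋ : 𝕜) - 1) * C) 0 :=
        mul_le_max_mul_zero C (Nat.cast_nonneg _) ncard_le

theorem body_jobs_bound_general (hT : 0 < T) (hr : IsSporadic T r) (hs : s ≤ r 0)
    (ha : r 0 < a) :
    (bodyJobs r a b).Finite ∧
    ((bodyJobs r a b).ncard : ℤ) ≤ max (⌊(b - s) / T⌋ - 1) 0 ∧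
    ∀ (w : ℕ → 𝕜) (C : 𝕜), (∀ j ∈ bodyJobs r a b, w j ≤ C) →
      ∑ᶠ j ∈ bodyJobs r a b, w j ≤ max (((⌊(b - s) / T⌋ : 𝕜) - 1) * C) 0 :=
  ⟨hr.finite_bodyJobs hT ha, hr.ncard_bodyJobs_le hT hs ha,
    fun _ _ => hr.finsum_mem_bodyJobs_le hT hs ha⟩

end FloorRing

/-- Sporadic releases `r : ℕ → ℝ` with minimum inter-arrival time
`T > 0`, problem window `[t, t + Δ)`, span `L` and worst-case response time `R`
with `0 ≤ L ≤ R`.  The carry-in job (job `0`) is released strictly before the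
window but no earlier than `t - (R - L)`.  Job `j` is a *body job* if
`t ≤ r j` and `r (j+1) < t + Δ`.  Then the set `B` of body jobs is finite with
at most `max (⌊(Δ - L + R)/T⌋ - 1) 0` elements, and if every job `j` generates
workload `0 ≤ w j ≤ C` (with `C ≥ 0`), the total workload of the body jobs is at
most `max ((⌊(Δ - L + R)/T⌋ - 1) * C) 0`. -/
theorem body_jobs_bound (T L R Δ t C : ℝ) (hT : 0 < T) (hL0 : 0 ≤ L) (hLR : L ≤ R)
    (hC : 0 ≤ C) (r : ℕ → ℝ) (hr : ∀ j : ℕ, r j + T ≤ r (j + 1))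
    (hci₁ : t - (R - L) ≤ r 0) (hci₂ : r 0 < t) :
    ({j : ℕ | t ≤ r j ∧ r (j + 1) < t + Δ}).Finite ∧
    (({j : ℕ | t ≤ r j ∧ r (j + 1) < t + Δ}).ncard : ℤ) ≤
      max (⌊(Δ - L + R) / T⌋ - 1) 0 ∧
    ∀ w : ℕ → ℝ, (∀ j : ℕ, 0 ≤ w j) → (∀ j : ℕ, w j ≤ C) →
      ∑ᶠ j ∈ {j : ℕ | t ≤ r j ∧ r (j + 1) < t + Δ}, w j ≤
        max (((⌊(Δ - L + R) / T⌋ : ℝ) - 1) * C) 0 := by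
  obtain ⟨hfin, hcard, hsum⟩ := body_jobs_bound_general (b := t + Δ) hT hr hci₁ hci₂
  rw [show Δ - L + R = t + Δ - (t - (R - L)) by ring]
  exact ⟨hfin, hcard, fun w _ hw => hsum w C fun j _ => hw j⟩
end

section
/- Let (V, E) be a finite DAG with V nonempty and worst-case execution times C : V → ℕ. Let S = S_C be the ASAP start-time function for execution times C, and let L = max over v of (S v + C v) be the makespan of the full-WCET ASAP schedule. Then for every carry-in window length Δ : ℕ, the workload executed by this schedule during the final window [L ∸ Δ, L) equals Σ_{v ∈ V} (C v ∸ ((L ∸ S v) ∸ Δ)); that is, Σ_{v ∈ V} card({t : ℕ | L ∸ Δ ≤ t ∧ t < L ∧ S v ≤ t ∧ t < S v + C v}) = Σ_{v ∈ V} (C v ∸ ((L ∸ S v) ∸ Δ)), where ∸ is truncated subtraction on ℕ. (This is the carry-in workload formula: each subtask v contributes max(C v − max(L − S v − Δ, 0), 0) to the carry-in window.) -/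
/-!
A window `[L - Δ, L)` whose end is no earlier than the completion of a subtask executed during
`[s, s + c)` can miss only the steps of that subtask preceding `L - Δ`. There are `(L - Δ) - s` such
steps, capped by `c`, and both the cap and the case `L - Δ ≤ s` are absorbed by truncated
subtraction.
-/

open scoped Classical

theorem ncard_Ico_inter_Ico_add_of_le {a b s c : ℕ} (h : s + c ≤ b) :
    (Set.Ico a b ∩ Set.Ico s (s + c)).ncard = c - (a - s) := by
  calc (Set.Ico a b ∩ Set.Ico s (s + c)).ncard
      = (Set.Ico (max s a) (s + c)).ncard := by
        rw [Set.Ico_inter_Ico, inf_eq_right.mpr h, sup_comm]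
    _ = s + c - max s a := Set.ncard_Ico_nat _ _
    _ = s + c - (s + (a - s)) := by rw [add_tsub_eq_max]
    _ = c - (a - s) := add_tsub_add_eq_tsub_left s c (a - s)

theorem carryin_workload_formula_general {ι : Type*} (T : Finset ι) (C S : ι → ℕ) {L : ℕ}
    (hL : ∀ v ∈ T, S v + C v ≤ L) (Δ : ℕ) :
    ∑ v ∈ T, {t : ℕ | L - Δ ≤ t ∧ t < L ∧ S v ≤ t ∧ t < S v + C v}.ncard =
      ∑ v ∈ T, (C v - ((L - S v) - Δ)) := by
  refine Finset.sum_congr rfl fun v hv => ?_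
  have executed_eq : {t : ℕ | L - Δ ≤ t ∧ t < L ∧ S v ≤ t ∧ t < S v + C v} =
      Set.Ico (L - Δ) L ∩ Set.Ico (S v) (S v + C v) :=
    Set.ext fun _ => and_assoc.symm
  rw [executed_eq, ncard_Ico_inter_Ico_add_of_le (hL v hv), tsub_right_comm]

/-- Carry-in workload formula.  Let `S` be the ASAP start-time
function of a finite nonempty DAG `(V, E)` for the worst-case execution times
`C : V → ℕ`, and `L = max over v of (S v + C v)` the makespan of the full-WCET
ASAP schedule (subtask `v` executes exactly during `[S v, S v + C v)`).  For any
carry-in window length `Δ`, the workload executed during the final window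
`[L - Δ, L)` equals `Σ_v (C v - ((L - S v) - Δ))` (truncated subtraction),
i.e. each subtask `v` contributes `max (C v - max (L - S v - Δ, 0), 0)`. -/
theorem carryin_workload_formula {V : Type*} [Fintype V] [Nonempty V]
    (E : V → V → Prop) (hE : ∀ v : V, ¬ Relation.TransGen E v v)
    (C S : V → ℕ)
    (hS : ∀ v : V,
      S v = (Finset.univ.filter (fun u => E u v)).sup (fun u => S u + C u))
    (L : ℕ) (hL : L = Finset.univ.sup (fun v => S v + C v)) (Δ : ℕ) :
    ∑ v : V, ({t : ℕ | L - Δ ≤ t ∧ t < L ∧ S v ≤ t ∧ t < S v + C v}).ncard =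
      ∑ v : V, (C v - ((L - S v) - Δ)) :=
  carryin_workload_formula_general Finset.univ C S
    (fun _ hv => hL ▸ Finset.le_sup (f := fun v => S v + C v) hv) Δ
end
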